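/- arXiv:1505.04909 — 3 statements merged into one kernel-verified Lean document; each statement's English description precedes it below -/
import Mathlib

section
/- Let M and K be positive integers, let G be a real M×K matrix, and let Q be a symmetric positive-definite real M×M matrix. Then tr(Gᵀ Q⁻¹ G) ≥ [tr(Gᵀ G)]² / tr(Gᵀ Q G), provided tr(Gᵀ Q G) > 0. -/
open Matrix

/-- Trace Cauchy–Schwarz inequality (Lemma 1 of the paper):
for a real `M × K` matrix `G` and a symmetric positive-definite `M × M` matrix `Q`,
`tr(Gᵀ Q⁻¹ G) ≥ [tr(Gᵀ G)]² / tr(Gᵀ Q G)` provided `tr(Gᵀ Q G) > 0`. -/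
theorem stmt_0 (M K : ℕ) (hM : 0 < M) (hK : 0 < K)
    (G : Matrix (Fin M) (Fin K) ℝ) (Q : Matrix (Fin M) (Fin M) ℝ)
    (hQ : Q.PosDef)
    (htr : 0 < (Gᵀ * Q * G).trace) :
    ((Gᵀ * G).trace) ^ 2 / (Gᵀ * Q * G).trace ≤ (Gᵀ * Q⁻¹ * G).trace := by
  have hu : IsUnit Q.det := (Matrix.isUnit_iff_isUnit_det Q).1 hQ.isUnit
  have hT : Qᵀ = Q := by
    have h := hQ.isHermitian
    rwa [Matrix.IsHermitian, Matrix.conjTranspose_eq_transpose_of_trivial] at h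
  have key : ∀ t : ℝ, 0 ≤ t ^ 2 * (Gᵀ * Q * G).trace - 2 * t * (Gᵀ * G).trace
      + (Gᵀ * Q⁻¹ * G).trace := by
    intro t
    have h := (hQ.inv.posSemidef.conjTranspose_mul_mul_same (t • (Q * G) - G)).trace_nonneg
    have e : (t • (Q * G) - G)ᴴ * Q⁻¹ * (t • (Q * G) - G)
        = (t ^ 2) • (Gᵀ * Q * G) - (2 * t) • (Gᵀ * G) + Gᵀ * Q⁻¹ * G := by
      have e1 : (t • (Q * G) - G)ᴴ * Q⁻¹ = t • Gᵀ - Gᵀ * Q⁻¹ := by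
        rw [Matrix.conjTranspose_eq_transpose_of_trivial, Matrix.transpose_sub,
          Matrix.transpose_smul, Matrix.transpose_mul, hT, Matrix.sub_mul, Matrix.smul_mul,
          Matrix.mul_nonsing_inv_cancel_right _ _ hu]
      have e2 : Gᵀ * Q⁻¹ * (Q * G) = Gᵀ * G := by
        rw [← Matrix.mul_assoc, Matrix.nonsing_inv_mul_cancel_right _ _ hu]
      rw [e1, Matrix.sub_mul, Matrix.mul_sub, Matrix.mul_sub, Matrix.mul_smul, Matrix.mul_smul,
        e2, Matrix.smul_mul, Matrix.smul_mul, ← Matrix.mul_assoc]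
      module
    rw [e] at h
    simpa [Matrix.trace_add, Matrix.trace_sub, Matrix.trace_smul] using h
  have h := key ((Gᵀ * G).trace / (Gᵀ * Q * G).trace)
  have e3 : ((Gᵀ * G).trace / (Gᵀ * Q * G).trace) ^ 2 * (Gᵀ * Q * G).trace
      - 2 * ((Gᵀ * G).trace / (Gᵀ * Q * G).trace) * (Gᵀ * G).trace
      = - ((Gᵀ * G).trace ^ 2 / (Gᵀ * Q * G).trace) := by
    have := htr.ne'
    field_simp
    ring
  rw [e3] at h
  linarith
end

section
/- Let Φ be a symmetric positive-semidefinite real M×M matrix, let Q be a symmetric positive-definite real M×M matrix, and let D be a real diagonal M×M matrix such that tr(Φ D Q D) > 0. Then tr(Φ D Q⁻¹ D) ≥ [tr(Φ D²)]² / tr(Φ D Q D). -/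
open Matrix

open scoped MatrixOrder in
theorem aux_factor (M : ℕ) (Φ : Matrix (Fin M) (Fin M) ℝ) (hΦ : Φ.PosSemidef) :
    ∃ B : Matrix (Fin M) (Fin M) ℝ, Φ = Bᴴ * B :=
  CStarAlgebra.nonneg_iff_eq_star_mul_self.mp hΦ.nonneg

/-- The key bounding step used for the MSE upper bound ξ̄_obj,AF (Eq. (19) of the paper):
for symmetric PSD `Φ`, symmetric positive-definite `Q`, and diagonal `D` with
`tr(Φ D Q D) > 0`, we have `tr(Φ D Q⁻¹ D) ≥ [tr(Φ D²)]² / tr(Φ D Q D)`. -/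
theorem stmt_2 (M : ℕ) (Φ Q D : Matrix (Fin M) (Fin M) ℝ)
    (hΦ : Φ.PosSemidef) (hQ : Q.PosDef) (hD : D.IsDiag)
    (htr : 0 < (Φ * D * Q * D).trace) :
    ((Φ * D * D).trace) ^ 2 / (Φ * D * Q * D).trace ≤ (Φ * D * Q⁻¹ * D).trace := by
  obtain ⟨B, hB⟩ := aux_factor M Φ hΦ
  have hDt : Dᴴ = D := by
    rw [conjTranspose_eq_transpose_of_trivial]; exact hD.isSymm
  have hu : IsUnit Q.det := (isUnit_iff_isUnit_det Q).mp hQ.isUnit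
  have h1 : Q⁻¹ * Q = 1 := nonsing_inv_mul Q hu
  have h2 : Q * Q⁻¹ = 1 := mul_nonsing_inv Q hu
  have hQH : Qᴴ = Q := hQ.isHermitian
  have key : ∀ t : ℝ, 0 ≤ (Φ * D * Q⁻¹ * D).trace - 2 * t * (Φ * D * D).trace
      + t ^ 2 * (Φ * D * Q * D).trace := by
    intro t
    have hX := (hQ.inv.posSemidef.mul_mul_conjTranspose_same (1 - t • Q))
    have hY := (hX.mul_mul_conjTranspose_same (B * D)).trace_nonneg
    have e : (1 - t • Q) * Q⁻¹ * (1 - t • Q)ᴴ = Q⁻¹ - (2 * t) • 1 + t ^ 2 • Q := by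
      simp only [conjTranspose_sub, conjTranspose_one, conjTranspose_smul, hQH, star_trivial,
        sub_mul, mul_sub, one_mul, mul_one, smul_mul_assoc, mul_smul_comm, h1, h2]
      module
    have cyc : ∀ X : Matrix (Fin M) (Fin M) ℝ,
        (B * D * X * (B * D)ᴴ).trace = (Φ * D * X * D).trace := by
      intro X
      rw [conjTranspose_mul, hDt, hB, ← mul_assoc, trace_mul_comm]
      simp only [mul_assoc]
    rw [e, cyc] at hY
    simpa [mul_add, mul_sub, add_mul, sub_mul, trace_add, trace_sub] using hY
  have := key ((Φ * D * D).trace / (Φ * D * Q * D).trace)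
  set a := (Φ * D * Q * D).trace
  set b := (Φ * D * D).trace
  have e : 2 * (b / a) * b - (b / a) ^ 2 * a = b ^ 2 / a := by
    field_simp; ring
  linarith
end

section
/- Fix an integer N ≥ 1, a probability p ∈ [0,1], and consider the Markov chain on states {0, 1, …, N} with transition probabilities: from each state k with 0 ≤ k ≤ N−1, move to k+1 with probability p and stay at k with probability 1−p; from state N, move to state 1 with probability p and to state 0 with probability 1−p. Then the vector π given by π₀ = (1−p)/N, π_k = 1/N for 1 ≤ k ≤ N−1, and π_N = p/N is a stationary distribution of this chain: its entries are nonnegative, sum to 1, and satisfy πᵀ P = πᵀ where P is the transition matrix. -/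
open Matrix

/-- Section III-A of the paper (Fig. 3): the stationary distribution of the
accumulated-energy Markov chain under Bernoulli energy arrivals.
States are `0, 1, …, N`; from each state `k < N` the chain moves to `k+1`
with probability `p` and stays at `k` with probability `1−p`; from state `N`
it moves to `1` with probability `p` and to `0` with probability `1−p`.
The vector `π` with `π₀ = (1−p)/N`, `π_k = 1/N` for `1 ≤ k ≤ N−1`, `π_N = p/N`
is a stationary distribution. -/
theorem stmt_6 (N : ℕ) (hN : 1 ≤ N) (p : ℝ) (hp : p ∈ Set.Icc (0 : ℝ) 1)
    (P : Matrix (Fin (N + 1)) (Fin (N + 1)) ℝ)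
    (hP : ∀ i j : Fin (N + 1), P i j =
      if i.val < N then
        (if j.val = i.val + 1 then p else if j = i then 1 - p else 0)
      else
        (if j.val = 1 then p else if j.val = 0 then 1 - p else 0))
    (π : Fin (N + 1) → ℝ)
    (hπ : ∀ i : Fin (N + 1), π i =
      if i.val = 0 then (1 - p) / N
      else if i.val = N then p / N
      else 1 / N) :
    (∀ i, 0 ≤ π i) ∧ (∑ i, π i = 1) ∧ Matrix.vecMul π P = π := by
  obtain ⟨hp0, hp1⟩ := hp
  have hNpos : (0 : ℝ) < N := by exact_mod_cast hN
  have hNne : (N : ℝ) ≠ 0 := hNpos.ne'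
  refine ⟨?_, ?_, ?_⟩
  · intro i
    rw [hπ]
    have : 0 ≤ 1 - p := by linarith
    split_ifs <;> positivity
  · have h : ∀ i : Fin (N + 1), π i = 1 / N + (if i = (0 : Fin (N + 1)) then -p / N else 0)
        + (if i = Fin.last N then (p - 1) / N else 0) := by
      intro i
      rw [hπ]
      simp only [Fin.ext_iff, Fin.val_last, Fin.val_zero]
      split_ifs <;> first | omega | ring
    rw [Finset.sum_congr rfl (fun i _ => h i)]
    simp only [Finset.sum_add_distrib, Finset.sum_ite_eq', Finset.mem_univ, if_true,
      Finset.sum_const, Finset.card_univ, Fintype.card_fin, nsmul_eq_mul]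
    push_cast
    field_simp
    ring
  · funext j
    have hj := j.isLt
    let q : Fin (N + 1) := ⟨j.val - 1, by omega⟩
    have hq : q.val = j.val - 1 := rfl
    have h : ∀ i : Fin (N + 1), π i * P i j =
        (if i = j then (if j.val < N then π j * (1 - p) else 0) else 0)
        + (if i = q then (if 1 ≤ j.val then π q * p else 0) else 0)
        + (if i = Fin.last N then π (Fin.last N) *
            (if j.val = 1 then p else if j.val = 0 then 1 - p else 0) else 0) := by
      intro i
      have hi := i.isLt
      rw [hP]
      by_cases h1 : i = j
      · subst h1
        simp only [Fin.ext_iff, Fin.val_last, hq]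
        by_cases h2 : i.val = N
        · have : i = Fin.last N := Fin.ext h2
          rw [this]
          simp only [Fin.val_last]
          split_ifs <;> first | omega | ring
        · split_ifs <;> first | omega | ring
      · by_cases h2 : i = q
        · have h3 : i.val = j.val - 1 := by rw [h2]
          have h4 : i.val ≠ j.val := fun h => h1 (Fin.ext h)
          rw [← h2]
          simp only [Fin.ext_iff, Fin.val_last]
          split_ifs <;> first | omega | ring
        · have h3 : i.val ≠ j.val - 1 := fun h => h2 (Fin.ext h)
          have h4 : i.val ≠ j.val := fun h => h1 (Fin.ext h)
          by_cases h5 : i = Fin.last N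
          · subst h5
            simp only [Fin.ext_iff, Fin.val_last, hq] at *
            split_ifs <;> first | omega | ring
          · have h6 : i.val ≠ N := fun h => h5 (Fin.ext h)
            simp only [Fin.ext_iff, Fin.val_last, hq]
            split_ifs <;> first | omega | ring
    simp only [Matrix.vecMul, dotProduct]
    rw [Finset.sum_congr rfl (fun i _ => h i)]
    simp only [Finset.sum_add_distrib, Finset.sum_ite_eq', Finset.mem_univ, if_true]
    simp only [hπ, hq, Fin.val_last]
    split_ifs <;> first | omega | (field_simp; done) | (field_simp; ring)
end
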